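/- arXiv:2312.09789 — 4 statements merged into one kernel-verified Lean document; each statement's English description precedes it below -/
import Mathlib

section
/- Let n ≥ 1, 1 ≤ l ≤ n, C_l > 0, C_u > 0, labels yᵢ ∈ {−1,+1} for i = 1,…,l and ground-truth labels yᵢ^{gt} ∈ {−1,+1} for i = l+1,…,n. Define β ∈ ℝⁿ by βᵢ = yᵢ√(2C_l) for i ≤ l and βᵢ = yᵢ^{gt}√(2C_u) for i > l, and define f : ℝⁿ → ℝ by f(z) = ‖z‖² − (zᵀβ)²/(1 + ‖β‖²). Then for every z ∈ ℝⁿ satisfying yᵢ zᵢ ≥ √(2C_l) for all i ≤ l and zᵢ² ≥ 2C_u for all i > l, one has f(z) ≥ f(β) = ‖β‖²/(1 + ‖β‖²). In particular, β is a global minimizer of f over this feasible set (and β itself is feasible). -/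
/-!
By Cauchy–Schwarz, `(zᵀβ)² ≤ ‖z‖²‖β‖²`, so `f z ≥ ‖z‖² / (1 + ‖β‖²)`, with equality at `z = β`.
Both kinds of constraint force `|βᵢ| ≤ |zᵢ|`, so `‖β‖² ≤ ‖z‖²` on the feasible set.
-/

open Matrix

section DotProduct

variable {ι R : Type*} [Fintype ι] [LinearOrder R]

theorem one_add_dotProduct_self_pos [Ring R] [IsStrictOrderedRing R] (v : ι → R) :
    0 < 1 + v ⬝ᵥ v :=
  add_pos_of_pos_of_nonneg one_pos (Finset.sum_nonneg fun i _ => mul_self_nonneg (v i))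

theorem dotProduct_self_le_dotProduct_self_of_abs_le_abs [Ring R] [IsStrictOrderedRing R]
    {v w : ι → R} (h : ∀ i, |v i| ≤ |w i|) : v ⬝ᵥ v ≤ w ⬝ᵥ w :=
  Finset.sum_le_sum fun i _ => abs_le_iff_mul_self_le.mp (h i)

theorem dotProduct_sq_le_dotProduct_self_mul_dotProduct_self [CommRing R]
    [IsStrictOrderedRing R] (v w : ι → R) : (v ⬝ᵥ w) ^ 2 ≤ (v ⬝ᵥ v) * (w ⬝ᵥ w) := by
  simpa only [dotProduct, sq] using Finset.sum_mul_sq_le_sq_mul_sq Finset.univ v w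

end DotProduct

section Objective

variable {ι K : Type*} [Fintype ι] [Field K]

/-- The objective `f(z) = ‖z‖² − (zᵀβ)² / (1 + ‖β‖²)` of the scaled ideal-kernel S3VM problem,
with squared norms written as dot products. -/
def idealKernelObjective (β z : ι → K) : K :=
  z ⬝ᵥ z - (z ⬝ᵥ β) ^ 2 / (1 + β ⬝ᵥ β)

variable [LinearOrder K] [IsStrictOrderedRing K]

theorem idealKernelObjective_self (β : ι → K) :
    idealKernelObjective β β = (β ⬝ᵥ β) / (1 + β ⬝ᵥ β) := by
  have hpos := one_add_dotProduct_self_pos β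
  unfold idealKernelObjective
  field_simp
  ring

theorem dotProduct_self_div_le_idealKernelObjective (β z : ι → K) :
    (z ⬝ᵥ z) / (1 + β ⬝ᵥ β) ≤ idealKernelObjective β z := by
  have hpos := one_add_dotProduct_self_pos β
  calc (z ⬝ᵥ z) / (1 + β ⬝ᵥ β)
      = z ⬝ᵥ z - (z ⬝ᵥ z) * (β ⬝ᵥ β) / (1 + β ⬝ᵥ β) := by field_simp; ring
    _ ≤ z ⬝ᵥ z - (z ⬝ᵥ β) ^ 2 / (1 + β ⬝ᵥ β) := by
      gcongr
      exact dotProduct_sq_le_dotProduct_self_mul_dotProduct_self z β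

theorem idealKernelObjective_self_le_of_dotProduct_self_le {β z : ι → K}
    (h : β ⬝ᵥ β ≤ z ⬝ᵥ z) :
    idealKernelObjective β β ≤ idealKernelObjective β z :=
  calc idealKernelObjective β β
      = (β ⬝ᵥ β) / (1 + β ⬝ᵥ β) := idealKernelObjective_self β
    _ ≤ (z ⬝ᵥ z) / (1 + β ⬝ᵥ β) := by
      gcongr
      exact (one_add_dotProduct_self_pos β).le
    _ ≤ idealKernelObjective β z := dotProduct_self_div_le_idealKernelObjective β z

end Objective

section Feasible

variable {ι : Type*} {labeled : Set ι} {C y z : ι → ℝ}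

/-- The feasible set of the scaled S3VM problem. Each index carries its own cost `C i`; the
original problem takes `C = C_l` on `labeled` and `C = C_u` off it. -/
def s3vmFeasibleSet (labeled : Set ι) (C y : ι → ℝ) : Set (ι → ℝ) :=
  {z | (∀ i ∈ labeled, √(2 * C i) ≤ y i * z i) ∧ ∀ i ∉ labeled, 2 * C i ≤ z i ^ 2}

/-- The vector `βᵢ = yᵢ √(2 Cᵢ)` defining the ideal kernel, where `y` collects the given labels
and the ground-truth labels of the unlabeled points. -/
noncomputable def idealKernelVector (C y : ι → ℝ) (i : ι) : ℝ :=
  y i * √(2 * C i)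

theorem abs_idealKernelVector {i : ι} (hy : |y i| = 1) :
    |idealKernelVector C y i| = √(2 * C i) := by
  rw [idealKernelVector, abs_mul, hy, one_mul, abs_of_nonneg (Real.sqrt_nonneg _)]

theorem mem_s3vmFeasibleSet_piecewise [DecidablePred (· ∈ labeled)] {Cl Cu : ι → ℝ} :
    z ∈ s3vmFeasibleSet labeled (labeled.piecewise Cl Cu) y ↔
      (∀ i ∈ labeled, √(2 * Cl i) ≤ y i * z i) ∧ ∀ i ∉ labeled, 2 * Cu i ≤ z i ^ 2 :=
  and_congr (forall₂_congr fun _ hi => by rw [Set.piecewise_eq_of_mem _ _ _ hi])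
    (forall₂_congr fun _ hi => by rw [Set.piecewise_eq_of_notMem _ _ _ hi])

theorem idealKernelVector_mem_s3vmFeasibleSet (hC : ∀ i ∉ labeled, 0 ≤ C i)
    (hy : ∀ i, |y i| = 1) : idealKernelVector C y ∈ s3vmFeasibleSet labeled C y := by
  refine ⟨fun i _ => ?_, fun i hi => ?_⟩
  · rw [idealKernelVector, ← mul_assoc, ← abs_mul_abs_self (y i), hy, one_mul, one_mul]
  · have hCi := hC i hi
    rw [← sq_abs, abs_idealKernelVector (hy i), Real.sq_sqrt (by positivity)]

theorem sqrt_le_abs_of_mem_s3vmFeasibleSet {i : ι}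
    (hz : z ∈ s3vmFeasibleSet labeled C y) (hy : |y i| = 1) : √(2 * C i) ≤ |z i| := by
  by_cases hi : i ∈ labeled
  · calc √(2 * C i) ≤ y i * z i := hz.1 i hi
      _ ≤ |y i * z i| := le_abs_self _
      _ = |z i| := by rw [abs_mul, hy, one_mul]
  · calc √(2 * C i) ≤ √(z i ^ 2) := Real.sqrt_le_sqrt (hz.2 i hi)
      _ = |z i| := Real.sqrt_sq_eq_abs _

theorem isMinOn_idealKernelObjective_idealKernelVector [Fintype ι] (hy : ∀ i, |y i| = 1) :
    IsMinOn (idealKernelObjective (idealKernelVector C y)) (s3vmFeasibleSet labeled C y)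
      (idealKernelVector C y) := by
  refine isMinOn_iff.mpr fun z hz => ?_
  refine idealKernelObjective_self_le_of_dotProduct_self_le ?_
  refine dotProduct_self_le_dotProduct_self_of_abs_le_abs fun i => ?_
  rw [abs_idealKernelVector (hy i)]
  exact sqrt_le_abs_of_mem_s3vmFeasibleSet hz (hy i)

theorem ideal_kernel_scaled_global_min_general [Fintype ι] (labeled : Set ι) {C y β : ι → ℝ}
    (hC : 0 ≤ C) (hy : ∀ i, |y i| = 1) (hβ : β = idealKernelVector C y) :
    β ∈ s3vmFeasibleSet labeled C y ∧
      idealKernelObjective β β = (β ⬝ᵥ β) / (1 + β ⬝ᵥ β) ∧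
      IsMinOn (idealKernelObjective β) (s3vmFeasibleSet labeled C y) β := by
  subst hβ
  exact ⟨idealKernelVector_mem_s3vmFeasibleSet (fun i _ => hC i) hy,
    idealKernelObjective_self _,
    isMinOn_idealKernelObjective_idealKernelVector hy⟩

end Feasible

/-- The scaled ideal-kernel S3VM problem: with `βᵢ = yᵢ√(2C_l)` for labeled indices `i < l`
and `βᵢ = yᵢ√(2C_u)` for unlabeled indices `i ≥ l` (where all entries of `y` lie in `{−1,+1}`),
and `f(z) = ‖z‖² − (zᵀβ)²/(1 + ‖β‖²)`, the point `β` is feasible for the constraints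
`yᵢ zᵢ ≥ √(2C_l)` (labeled `i`) and `zᵢ² ≥ 2C_u` (unlabeled `i`), satisfies
`f(β) = ‖β‖²/(1 + ‖β‖²)`, and is a global minimizer of `f` over the feasible set. -/
theorem ideal_kernel_scaled_global_min (n l : ℕ) (hn : 1 ≤ n) (hl : 1 ≤ l) (hln : l ≤ n)
    (Cl Cu : ℝ) (hCl : 0 < Cl) (hCu : 0 < Cu)
    (y : Fin n → ℝ) (hy : ∀ i, y i = -1 ∨ y i = 1)
    (β : Fin n → ℝ)
    (hβ : ∀ i : Fin n,
      β i = if (i : ℕ) < l then y i * Real.sqrt (2 * Cl) else y i * Real.sqrt (2 * Cu))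
    (f : (Fin n → ℝ) → ℝ)
    (hf : ∀ z : Fin n → ℝ, f z = z ⬝ᵥ z - (z ⬝ᵥ β) ^ 2 / (1 + β ⬝ᵥ β)) :
    (∀ i : Fin n, (i : ℕ) < l → y i * β i ≥ Real.sqrt (2 * Cl)) ∧
    (∀ i : Fin n, l ≤ (i : ℕ) → (β i) ^ 2 ≥ 2 * Cu) ∧
    f β = (β ⬝ᵥ β) / (1 + β ⬝ᵥ β) ∧
    (∀ z : Fin n → ℝ,
      (∀ i : Fin n, (i : ℕ) < l → y i * z i ≥ Real.sqrt (2 * Cl)) →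
      (∀ i : Fin n, l ≤ (i : ℕ) → (z i) ^ 2 ≥ 2 * Cu) →
      f z ≥ f β) := by
  obtain rfl : f = idealKernelObjective β := funext hf
  let labeled : Set (Fin n) := {i | (i : ℕ) < l}
  have hβ_eq : β = idealKernelVector (labeled.piecewise (fun _ => Cl) fun _ => Cu) y := by
    funext i
    change β i = y i * √(2 * if (i : ℕ) < l then Cl else Cu)
    rw [hβ]
    split_ifs <;> rfl
  simpa only [mem_s3vmFeasibleSet_piecewise, isMinOn_iff, labeled, Set.mem_ofPred_eq, not_lt,
    and_assoc, and_imp] using ideal_kernel_scaled_global_min_general labeled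
      (Set.le_piecewise (g := 0) (fun _ _ => hCl.le) fun _ _ => hCu.le)
      (fun i => (abs_eq zero_le_one).mpr (hy i).symm) hβ_eq
end

section
/- Let n ≥ 1, 1 ≤ l ≤ n, C_l > 0, C_u > 0, and let γ ∈ ℝⁿ satisfy γᵢ ∈ {−1,+1} for all i. Let D be the diagonal n×n matrix with Dᵢᵢ = 1/(2C_l) for i ≤ l and Dᵢᵢ = 1/(2C_u) for i > l. Then γ is a global minimizer of the function v ↦ vᵀ (D + γγᵀ)⁻¹ v over the feasible set {v ∈ ℝⁿ : γᵢ vᵢ ≥ 1 for all i ≤ l, and vᵢ² ≥ 1 for all i > l}, and the optimal value equals γᵀ(D+γγᵀ)⁻¹γ = (γᵀD⁻¹γ)/(1 + γᵀD⁻¹γ). (γ itself is feasible.) -/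
open Matrix

/-!
Let `B(v, w) = vᵀD⁻¹w` and `Q(v) = B(v, v)`. By Sherman–Morrison,
`vᵀ(D + γγᵀ)⁻¹v = Q(v) - B(v, γ)² / (1 + Q(γ))`, and Cauchy–Schwarz bounds `B(v, γ)²` by `Q(v)Q(γ)`.
So the objective is at least `Q(v) / (1 + Q(γ))`, with equality at `v = γ`. As `D` is a positive
diagonal matrix and every feasible `v` satisfies `|vᵢ| ≥ 1 = |γᵢ|`, also `Q(v) ≥ Q(γ)`.
-/

section Field

variable {ι K : Type*} [Fintype ι] [DecidableEq ι] [Field K] {A : Matrix ι ι K} {u w : ι → K}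

theorem inv_add_vecMulVec (hA : IsUnit A) (h : 1 + w ⬝ᵥ A⁻¹ *ᵥ u ≠ 0) :
    (A + vecMulVec u w)⁻¹ =
      A⁻¹ - (1 + w ⬝ᵥ A⁻¹ *ᵥ u)⁻¹ • vecMulVec (A⁻¹ *ᵥ u) (w ᵥ* A⁻¹) := by
  let U := replicateCol Unit u
  let W := replicateRow Unit w
  have hschur : (1 : Matrix Unit Unit K)⁻¹ + W * A⁻¹ * U = (1 + w ⬝ᵥ A⁻¹ *ᵥ u) • 1 := by
    ext
    rw [Matrix.mul_assoc, ← replicateCol_mulVec, inv_one]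
    simp [W, replicateRow_mul_replicateCol_apply]
  have hinv : ((1 + w ⬝ᵥ A⁻¹ *ᵥ u) • (1 : Matrix Unit Unit K))⁻¹ = (1 + w ⬝ᵥ A⁻¹ *ᵥ u)⁻¹ • 1 :=
    inv_eq_right_inv (by simp [smul_smul, h])
  have hunit : IsUnit ((1 + w ⬝ᵥ A⁻¹ *ᵥ u) • (1 : Matrix Unit Unit K)) := by
    simpa [isUnit_iff_isUnit_det] using h
  have woodbury := add_mul_mul_inv_eq_sub A U 1 W hA isUnit_one (hschur ▸ hunit)
  rw [hschur, hinv] at woodbury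
  simpa [U, W, vecMulVec_eq Unit, Matrix.mul_assoc, replicateCol_mulVec, replicateRow_vecMul]
    using woodbury

theorem dotProduct_inv_add_vecMulVec_mulVec (hA : IsUnit A) (h : 1 + w ⬝ᵥ A⁻¹ *ᵥ u ≠ 0)
    (x y : ι → K) :
    x ⬝ᵥ (A + vecMulVec u w)⁻¹ *ᵥ y =
      x ⬝ᵥ A⁻¹ *ᵥ y - (x ⬝ᵥ A⁻¹ *ᵥ u) * (w ⬝ᵥ A⁻¹ *ᵥ y) / (1 + w ⬝ᵥ A⁻¹ *ᵥ u) := by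
  rw [inv_add_vecMulVec hA h, sub_mulVec, smul_mulVec, vecMulVec_mulVec, op_smul_eq_smul,
    ← dotProduct_mulVec, dotProduct_sub, dotProduct_smul, dotProduct_smul, smul_eq_mul,
    smul_eq_mul]
  ring

theorem dotProduct_inv_add_vecMulVec_mulVec_eq_div (hA : IsUnit A) (h : 1 + w ⬝ᵥ A⁻¹ *ᵥ u ≠ 0) :
    w ⬝ᵥ (A + vecMulVec u w)⁻¹ *ᵥ u = (w ⬝ᵥ A⁻¹ *ᵥ u) / (1 + w ⬝ᵥ A⁻¹ *ᵥ u) := by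
  rw [dotProduct_inv_add_vecMulVec_mulVec hA h]
  field_simp
  ring

theorem dotProduct_inv_diagonal_mulVec_self {d : ι → K} (hd : ∀ i, d i ≠ 0) (x : ι → K) :
    x ⬝ᵥ (diagonal d)⁻¹ *ᵥ x = ∑ i, x i ^ 2 / d i := by
  have hinv : (diagonal d)⁻¹ = diagonal fun i ↦ (d i)⁻¹ :=
    inv_eq_right_inv (by simp [diagonal_mul_diagonal, hd])
  simp only [hinv, dotProduct, mulVec_diagonal]
  exact Finset.sum_congr rfl fun i _ ↦ by ring

end Field

theorem dotProduct_mulVec_mul_le_of_nonneg {ι R : Type*} [Fintype ι] [CommRing R]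
    [LinearOrder R] [IsStrictOrderedRing R] {A : Matrix ι ι R} (hA : ∀ x, 0 ≤ x ⬝ᵥ A *ᵥ x)
    (x y : ι → R) :
    (x ⬝ᵥ A *ᵥ y) * (y ⬝ᵥ A *ᵥ x) ≤ (x ⬝ᵥ A *ᵥ x) * (y ⬝ᵥ A *ᵥ y) := by
  classical
  simpa only [toBilin'_apply'] using
    LinearMap.BilinForm.apply_mul_apply_le_of_forall_zero_le A.toBilin'
      (by simpa only [toBilin'_apply'] using hA) x y

section OrderedField

variable {ι K : Type*} [Fintype ι] [DecidableEq ι] [Field K] [LinearOrder K]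
  [IsStrictOrderedRing K]

theorem div_le_dotProduct_inv_add_vecMulVec_mulVec {A : Matrix ι ι K} (hA : IsUnit A)
    (hnonneg : ∀ x, 0 ≤ x ⬝ᵥ A⁻¹ *ᵥ x) (g v : ι → K) :
    (v ⬝ᵥ A⁻¹ *ᵥ v) / (1 + g ⬝ᵥ A⁻¹ *ᵥ g) ≤ v ⬝ᵥ (A + vecMulVec g g)⁻¹ *ᵥ v := by
  have hpos : 0 < 1 + g ⬝ᵥ A⁻¹ *ᵥ g := add_pos_of_pos_of_nonneg one_pos (hnonneg g)
  have cauchySchwarz := dotProduct_mulVec_mul_le_of_nonneg hnonneg v g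
  rw [dotProduct_inv_add_vecMulVec_mulVec hA hpos.ne', le_sub_iff_add_le, ← add_div,
    div_le_iff₀ hpos]
  linarith

theorem ideal_kernel_global_min_general {d : ι → K} (hd : ∀ i, 0 < d i) (γ : ι → K) :
    γ ⬝ᵥ (diagonal d + vecMulVec γ γ)⁻¹ *ᵥ γ =
        (γ ⬝ᵥ (diagonal d)⁻¹ *ᵥ γ) / (1 + γ ⬝ᵥ (diagonal d)⁻¹ *ᵥ γ) ∧
      IsMinOn (fun v ↦ v ⬝ᵥ (diagonal d + vecMulVec γ γ)⁻¹ *ᵥ v) {v | ∀ i, |γ i| ≤ |v i|} γ := by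
  have hunit : IsUnit (diagonal d) :=
    isUnit_diagonal.2 (Pi.isUnit_iff.2 fun i ↦ (hd i).ne'.isUnit)
  have hform := dotProduct_inv_diagonal_mulVec_self fun i ↦ (hd i).ne'
  have hnonneg (x : ι → K) : 0 ≤ x ⬝ᵥ (diagonal d)⁻¹ *ᵥ x := by
    rw [hform]
    exact Finset.sum_nonneg fun i _ ↦ div_nonneg (sq_nonneg _) (hd i).le
  have hpos : 0 < 1 + γ ⬝ᵥ (diagonal d)⁻¹ *ᵥ γ := add_pos_of_pos_of_nonneg one_pos (hnonneg γ)
  have hval := dotProduct_inv_add_vecMulVec_mulVec_eq_div hunit hpos.ne'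
  refine ⟨hval, isMinOn_iff.2 fun v hv ↦ ?_⟩
  have hmono : γ ⬝ᵥ (diagonal d)⁻¹ *ᵥ γ ≤ v ⬝ᵥ (diagonal d)⁻¹ *ᵥ v := by
    rw [hform, hform]
    exact Finset.sum_le_sum fun i _ ↦ div_le_div_of_nonneg_right (sq_le_sq.2 (hv i)) (hd i).le
  calc γ ⬝ᵥ (diagonal d + vecMulVec γ γ)⁻¹ *ᵥ γ
      = (γ ⬝ᵥ (diagonal d)⁻¹ *ᵥ γ) / (1 + γ ⬝ᵥ (diagonal d)⁻¹ *ᵥ γ) := hval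
    _ ≤ (v ⬝ᵥ (diagonal d)⁻¹ *ᵥ v) / (1 + γ ⬝ᵥ (diagonal d)⁻¹ *ᵥ γ) :=
      div_le_div_of_nonneg_right hmono hpos.le
    _ ≤ v ⬝ᵥ (diagonal d + vecMulVec γ γ)⁻¹ *ᵥ v :=
      div_le_dotProduct_inv_add_vecMulVec_mulVec hunit hnonneg γ v

end OrderedField

/-- Ideal-kernel proposition, first part: with `γᵢ ∈ {−1,+1}` for all `i` and `D` the diagonal
matrix with `Dᵢᵢ = 1/(2C_l)` for labeled indices `i < l` and `Dᵢᵢ = 1/(2C_u)` for unlabeled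
indices `i ≥ l`, the vector `γ` is feasible and is a global minimizer of
`v ↦ vᵀ (D + γγᵀ)⁻¹ v` over `{v : γᵢvᵢ ≥ 1 for i < l, vᵢ² ≥ 1 for i ≥ l}`, with optimal value
`γᵀ(D+γγᵀ)⁻¹γ = (γᵀD⁻¹γ)/(1 + γᵀD⁻¹γ)`. -/
theorem ideal_kernel_global_min (n l : ℕ) (hn : 1 ≤ n) (hl : 1 ≤ l) (hln : l ≤ n)
    (Cl Cu : ℝ) (hCl : 0 < Cl) (hCu : 0 < Cu)
    (γ : Fin n → ℝ) (hγ : ∀ i, γ i = -1 ∨ γ i = 1)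
    (D : Matrix (Fin n) (Fin n) ℝ)
    (hD : D = Matrix.diagonal (fun i : Fin n =>
      if (i : ℕ) < l then 1 / (2 * Cl) else 1 / (2 * Cu))) :
    (∀ i : Fin n, (i : ℕ) < l → γ i * γ i ≥ 1) ∧
    (∀ i : Fin n, l ≤ (i : ℕ) → (γ i) ^ 2 ≥ 1) ∧
    γ ⬝ᵥ (D + vecMulVec γ γ)⁻¹ *ᵥ γ = (γ ⬝ᵥ D⁻¹ *ᵥ γ) / (1 + γ ⬝ᵥ D⁻¹ *ᵥ γ) ∧
    (∀ v : Fin n → ℝ,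
      (∀ i : Fin n, (i : ℕ) < l → γ i * v i ≥ 1) →
      (∀ i : Fin n, l ≤ (i : ℕ) → (v i) ^ 2 ≥ 1) →
      v ⬝ᵥ (D + vecMulVec γ γ)⁻¹ *ᵥ v ≥ γ ⬝ᵥ (D + vecMulVec γ γ)⁻¹ *ᵥ γ) := by
  subst hD
  have habs (i : Fin n) : |γ i| = 1 := (abs_eq zero_le_one).2 (hγ i).symm
  have hsq (i : Fin n) : γ i ^ 2 = 1 := by rw [← sq_abs, habs, one_pow]
  obtain ⟨hval, hmin⟩ := ideal_kernel_global_min_general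
    (d := fun i : Fin n ↦ if (i : ℕ) < l then 1 / (2 * Cl) else 1 / (2 * Cu))
    (fun i ↦ by split_ifs <;> positivity) γ
  refine ⟨fun i _ ↦ (sq (γ i) ▸ hsq i).ge, fun i _ ↦ (hsq i).ge, hval,
    fun v hlabeled hunlabeled ↦ hmin fun i ↦ ?_⟩
  rw [habs]
  obtain hi | hi := lt_or_ge (i : ℕ) l
  · calc 1 ≤ γ i * v i := hlabeled i hi
      _ ≤ |γ i * v i| := le_abs_self _
      _ = |v i| := by rw [abs_mul, habs, one_mul]
  · exact (one_le_sq_iff_one_le_abs (v i)).1 (hunlabeled i hi)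
end

section
/- Let n ≥ 2, 1 ≤ l < n, labels yᵢ ∈ {−1,+1} for i ≤ l, C a real symmetric positive semidefinite n×n matrix, and L, U ∈ ℝⁿ such that for every labeled index i ≤ l: yᵢ = 1 implies Lᵢ ≥ 1 and yᵢ = −1 implies Uᵢ ≤ −1. Define F_box = {(x, X) ∈ ℝⁿ × Sⁿ : Lᵢ ≤ xᵢ ≤ Uᵢ and 1 ≤ Xᵢᵢ ≤ max{Lᵢ², Uᵢ²} for all i, (1/(n−l)) Σ_{i>l} xᵢ = (1/l) Σ_{i≤l} yᵢ, and [[X, x],[xᵀ, 1]] positive semidefinite}, and F_basic = {(v, V) ∈ ℝⁿ × Sⁿ : yᵢvᵢ ≥ 1 for all i ≤ l, Vᵢᵢ ≥ 1 for all i, and [[V, v],[vᵀ, 1]] positive semidefinite}. Then F_box ⊆ F_basic; consequently, if F_box is nonempty, then inf{⟨C, X⟩ : (x, X) ∈ F_box} ≥ inf{⟨C, V⟩ : (v, V) ∈ F_basic}, i.e., the box-constrained SDP relaxation provides a lower bound at least as strong as the basic SDP relaxation. -/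
/-!
A labeled coordinate of a point of the box lies in `[1, ∞)` or `(-∞, -1]` according to the sign of
its label, so the feasible sets are nested. Passing to infima requires the objective to be bounded
below on the larger set: there `X` is a principal submatrix of a positive semidefinite matrix, and
the trace of a product of two positive semidefinite matrices is nonnegative.
-/

open Matrix Finset

/-- The `(n+1)×(n+1)` block matrix `[[X, x],[xᵀ, 1]]`. -/
noncomputable def liftedBlock {n : ℕ} (x : Fin n → ℝ) (X : Matrix (Fin n) (Fin n) ℝ) :
    Matrix (Fin n ⊕ Fin 1) (Fin n ⊕ Fin 1) ℝ :=
  Matrix.fromBlocks X (Matrix.of fun i (_ : Fin 1) => x i)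
    (Matrix.of fun (_ : Fin 1) j => x j) 1

lemma one_le_label_mul_of_mem_Icc {R : Type*} [Ring R] [PartialOrder R] [IsOrderedRing R]
    {y l u x : R} (hy : y = -1 ∨ y = 1) (hl : y = 1 → 1 ≤ l) (hu : y = -1 → u ≤ -1)
    (hx : x ∈ Set.Icc l u) : 1 ≤ y * x := by
  rcases hy with hneg | hpos
  · simpa only [hneg, neg_one_mul] using le_neg_of_le_neg (hx.2.trans (hu hneg))
  · simpa only [hpos, one_mul] using (hl hpos).trans hx.1

lemma posSemidef_of_liftedBlock {n : ℕ} {x : Fin n → ℝ} {X : Matrix (Fin n) (Fin n) ℝ}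
    (h : (liftedBlock x X).PosSemidef) : X.PosSemidef :=
  h.submatrix Sum.inl

section Trace

variable {ι 𝕜 : Type*} [Fintype ι] [RCLike 𝕜] {A B : Matrix ι ι 𝕜}

open scoped ComplexOrder MatrixOrder Matrix.Norms.L2Operator in
lemma trace_mul_nonneg_of_posSemidef (hA : A.PosSemidef) (hB : B.PosSemidef) :
    0 ≤ (A * B).trace := by
  classical
  obtain ⟨D, rfl⟩ := CStarAlgebra.nonneg_iff_eq_star_mul_self.mp hB.nonneg
  have trace_eq : (A * (star D * D)).trace = (D * A * Dᴴ).trace := by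
    rw [star_eq_conjTranspose, ← Matrix.mul_assoc, Matrix.trace_mul_comm, ← Matrix.mul_assoc]
  exact trace_eq ▸ (hA.mul_mul_conjTranspose_same D).trace_nonneg

open scoped ComplexOrder in
lemma bddBelow_image_trace_transpose_mul {α : Type*} {s : Set α} {f : α → Matrix ι ι 𝕜}
    (hf : ∀ a ∈ s, (f a).PosSemidef) (hB : B.PosSemidef) :
    BddBelow ((fun a => ((f a)ᵀ * B).trace) '' s) :=
  ⟨0, Set.forall_mem_image.2 fun a ha => trace_mul_nonneg_of_posSemidef (hf a ha).transpose hB⟩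

end Trace

/-- Proposition 1 of the paper: the feasible set of the box-constrained SDP relaxation is
contained in the feasible set of the basic SDP relaxation; consequently (if the former is
nonempty) the corresponding infimum of `⟨C, X⟩ = trace(XᵀC)` over the box-constrained set is at
least the infimum over the basic set, i.e. the box-constrained SDP relaxation gives a lower
bound at least as strong as the basic one. -/
theorem box_sdp_stronger_than_basic_sdp (n l : ℕ) (hn : 2 ≤ n) (hl : 1 ≤ l) (hln : l < n)
    (y : Fin n → ℝ) (hy : ∀ i : Fin n, (i : ℕ) < l → y i = -1 ∨ y i = 1)
    (C : Matrix (Fin n) (Fin n) ℝ) (hC : C.PosSemidef)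
    (L U : Fin n → ℝ)
    (hLU : ∀ i : Fin n, (i : ℕ) < l → (y i = 1 → 1 ≤ L i) ∧ (y i = -1 → U i ≤ -1))
    (Fbox Fbasic : Set ((Fin n → ℝ) × Matrix (Fin n) (Fin n) ℝ))
    (hFbox : Fbox = {p | p.2.IsSymm ∧
      (∀ i : Fin n, L i ≤ p.1 i ∧ p.1 i ≤ U i) ∧
      (∀ i : Fin n, 1 ≤ p.2 i i ∧ p.2 i i ≤ max ((L i) ^ 2) ((U i) ^ 2)) ∧
      (1 / ((n : ℝ) - (l : ℝ))) * ∑ i ∈ univ.filter (fun i : Fin n => l ≤ (i : ℕ)), p.1 i =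
        (1 / (l : ℝ)) * ∑ i ∈ univ.filter (fun i : Fin n => (i : ℕ) < l), y i ∧
      (liftedBlock p.1 p.2).PosSemidef})
    (hFbasic : Fbasic = {p | p.2.IsSymm ∧
      (∀ i : Fin n, (i : ℕ) < l → y i * p.1 i ≥ 1) ∧
      (∀ i : Fin n, 1 ≤ p.2 i i) ∧
      (liftedBlock p.1 p.2).PosSemidef}) :
    Fbox ⊆ Fbasic ∧
    (Fbox.Nonempty →
      sInf ((fun p : (Fin n → ℝ) × Matrix (Fin n) (Fin n) ℝ => ((p.2)ᵀ * C).trace) '' Fbasic) ≤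
      sInf ((fun p : (Fin n → ℝ) × Matrix (Fin n) (Fin n) ℝ => ((p.2)ᵀ * C).trace) '' Fbox)) := by
  have hsub : Fbox ⊆ Fbasic := by
    rw [hFbox, hFbasic]
    rintro p ⟨hsymm, hbox, hdiag, -, hpsd⟩
    have hlabel : ∀ i : Fin n, (i : ℕ) < l → 1 ≤ y i * p.1 i := fun i hi =>
      one_le_label_mul_of_mem_Icc (hy i hi) (hLU i hi).1 (hLU i hi).2 (hbox i)
    exact ⟨hsymm, hlabel, fun i => (hdiag i).1, hpsd⟩
  have hpsd : ∀ p ∈ Fbasic, p.2.PosSemidef := by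
    rw [hFbasic]
    exact fun p ⟨_, _, _, hlift⟩ => posSemidef_of_liftedBlock hlift
  have hbdd := bddBelow_image_trace_transpose_mul hpsd hC
  exact ⟨hsub, fun hne => csInf_le_csInf hbdd (hne.image _) (Set.image_mono hsub)⟩
end

section
/- Let C be a real symmetric n×n matrix, λ > 0, LB ≤ UB and γ real numbers with p := γ − (UB − LB)/λ ≥ 1, let i be an index, and let x ∈ ℝⁿ satisfy the Lagrangian lower bound xᵀCx + λ(xᵢ² − γ) ≥ LB and xᵀCx ≤ UB. Then xᵢ² ≥ p, and moreover: (i) if xᵢ ≥ Lᵢ for some real Lᵢ > −√p, then xᵢ ≥ √p; (ii) if xᵢ ≤ Uᵢ for some real Uᵢ < √p, then xᵢ ≤ −√p. -/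
open Matrix

theorem le_neg_or_le_of_sq_le_sq {R : Type*} [Ring R] [LinearOrder R] [IsStrictOrderedRing R]
    {r t : R} (h : r ^ 2 ≤ t ^ 2) : t ≤ -r ∨ r ≤ t :=
  le_abs'.mp ((le_abs_self r).trans (sq_le_sq.mp h))

section LinearOrderedField

variable {K : Type*} [Field K] [LinearOrder K] [IsStrictOrderedRing K]

theorem sub_gap_div_le_of_lagrangian_ge {obj constr lam LB UB γ : K} (hlam : 0 < lam)
    (hLagr : LB ≤ obj + lam * (constr - γ)) (hobj : obj ≤ UB) :
    γ - (UB - LB) / lam ≤ constr := by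
  have hslack : γ - constr ≤ (UB - LB) / lam := by
    rw [le_div_iff₀' hlam]
    linarith
  exact sub_le_comm.mp hslack

theorem marginals_bound_tightening_diag_upper_general {ι : Type*} (f : (ι → K) → K)
    {lam LB UB γ p r : K} (hlam : 0 < lam) (hp : p = γ - (UB - LB) / lam) (hr : r ^ 2 = p)
    {i : ι} {x : ι → K} (hLagr : LB ≤ f x + lam * (x i ^ 2 - γ)) (hobj : f x ≤ UB) :
    p ≤ x i ^ 2 ∧
    (∀ Li : K, -r < Li → Li ≤ x i → r ≤ x i) ∧
    (∀ Ui : K, Ui < r → x i ≤ Ui → x i ≤ -r) := by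
  have hsq : p ≤ x i ^ 2 := hp ▸ sub_gap_div_le_of_lagrangian_ge hlam hLagr hobj
  have hbranch : x i ≤ -r ∨ r ≤ x i := le_neg_or_le_of_sq_le_sq (hr.trans_le hsq)
  exact ⟨hsq, fun _ hL hx => hbranch.resolve_left (hL.trans_le hx).not_ge,
    fun _ hU hx => hbranch.resolve_right (hx.trans_lt hU).not_ge⟩

end LinearOrderedField

/-- Marginals-based bound tightening (second lemma): if the Lagrangian lower bound
`xᵀCx + λ(xᵢ² − γ) ≥ LB` holds and `xᵀCx ≤ UB` with `λ > 0`, `LB ≤ UB`, and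
`p = γ − (UB − LB)/λ ≥ 1`, then `xᵢ² ≥ p`; moreover (i) if `xᵢ ≥ Lᵢ` for some `Lᵢ > −√p`,
then `xᵢ ≥ √p`, and (ii) if `xᵢ ≤ Uᵢ` for some `Uᵢ < √p`, then `xᵢ ≤ −√p`. -/
theorem marginals_bound_tightening_diag_upper (n : ℕ)
    (C : Matrix (Fin n) (Fin n) ℝ) (hC : C.IsSymm)
    (lam LB UB γ : ℝ) (hlam : 0 < lam) (hLU : LB ≤ UB)
    (p : ℝ) (hp : p = γ - (UB - LB) / lam) (hp1 : 1 ≤ p)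
    (i : Fin n) (x : Fin n → ℝ)
    (h1 : x ⬝ᵥ C *ᵥ x + lam * ((x i) ^ 2 - γ) ≥ LB)
    (h2 : x ⬝ᵥ C *ᵥ x ≤ UB) :
    (x i) ^ 2 ≥ p ∧
    (∀ Li : ℝ, -Real.sqrt p < Li → Li ≤ x i → Real.sqrt p ≤ x i) ∧
    (∀ Ui : ℝ, Ui < Real.sqrt p → x i ≤ Ui → x i ≤ -Real.sqrt p) := by
  have hsqrt : Real.sqrt p ^ 2 = p := Real.sq_sqrt (zero_le_one.trans hp1)
  exact marginals_bound_tightening_diag_upper_general (fun y => y ⬝ᵥ C *ᵥ y) hlam hp hsqrt h1 h2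
end
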